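/- arXiv:1911.12140 — 6 statements merged into one kernel-verified Lean document; each statement's English description precedes it below -/
import Mathlib

section
/- Fix n ≥ 1 with i_n ≥ 1 and i_k = 0 for all k > n, and define the second representation (i'_k) of the same Q-rational number by i'_k = i_k for k < n, i'_n = i_n − 1, and i'_k = q_k − 1 for k > n. Then for every m ≥ 1 with m ≠ n, the generalized shift σ_m gives the same value on both representations: Σ_{k<m} i_k/(q_1⋯q_k) + Σ_{l>m} i_l/(q_1⋯q_{m−1}q_{m+1}⋯q_l) = Σ_{k<m} i'_k/(q_1⋯q_k) + Σ_{l>m} i'_l/(q_1⋯q_{m−1}q_{m+1}⋯q_l). -/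
/-- `q_1 q_2 ⋯ q_n` (1-based indexing; `prodQ q 0 = 1`). -/
noncomputable def prodQ (q : ℕ → ℕ) (n : ℕ) : ℝ :=
  ∏ j ∈ Finset.Icc 1 n, (q j : ℝ)

/-- The positive Cantor series value `x = Σ_{n=1}^∞ i_n/(q_1 ⋯ q_n)`. -/
noncomputable def cantorVal (q i : ℕ → ℕ) : ℝ :=
  ∑' n : ℕ, (i (n + 1) : ℝ) / prodQ q (n + 1)

/-- The generalized shift operator
`σ_m = Σ_{k=1}^{m-1} i_k/(q_1⋯q_k) + Σ_{l=m+1}^∞ i_l/(q_1⋯q_{m-1} q_{m+1}⋯q_l)`. -/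
noncomputable def sigmaC (q i : ℕ → ℕ) (m : ℕ) : ℝ :=
  (∑ k ∈ Finset.Icc 1 (m - 1), (i k : ℝ) / prodQ q k) +
    ∑' t : ℕ, (i (m + 1 + t) : ℝ) /
      (prodQ q (m - 1) * ∏ j ∈ Finset.Icc (m + 1) (m + 1 + t), (q j : ℝ))

/-- The `m`-fold shift `σ^m(x) = Σ_{k=m+1}^∞ i_k/(q_{m+1} ⋯ q_k)`. -/
noncomputable def shiftVal (q i : ℕ → ℕ) (m : ℕ) : ℝ :=
  ∑' t : ℕ, (i (m + 1 + t) : ℝ) / ∏ j ∈ Finset.Icc (m + 1) (m + 1 + t), (q j : ℝ)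

lemma tail_aux (q a : ℕ → ℕ) (hq : ∀ n, 1 ≤ n → 2 ≤ q n) (m : ℕ) (C : ℝ) (hC : 0 < C)
    (N₀ : ℕ) (S : ℝ)
    (hS : ∑ t ∈ Finset.range N₀, (a (m + 1 + t) : ℝ) /
      (C * ∏ j ∈ Finset.Icc (m + 1) (m + 1 + t), (q j : ℝ))
        = S - 1 / (C * ∏ j ∈ Finset.Icc (m + 1) (m + N₀), (q j : ℝ)))
    (ha : ∀ t, N₀ ≤ t → a (m + 1 + t) = q (m + 1 + t) - 1) :
    ∑' t : ℕ, (a (m + 1 + t) : ℝ) /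
      (C * ∏ j ∈ Finset.Icc (m + 1) (m + 1 + t), (q j : ℝ)) = S := by
  have hq2 : ∀ t, (2 : ℝ) ≤ q (m + 1 + t) := fun t => by
    exact_mod_cast hq (m + 1 + t) (by omega)
  have hstep : ∀ t, ∏ j ∈ Finset.Icc (m + 1) (m + 1 + t), (q j : ℝ)
      = (∏ j ∈ Finset.Icc (m + 1) (m + t), (q j : ℝ)) * q (m + 1 + t) := fun t => by
    have : m + 1 + t = (m + t) + 1 := by omega
    rw [this, Finset.prod_Icc_succ_top (by omega)]
  have hpow : ∀ t, (2 : ℝ) ^ t ≤ ∏ j ∈ Finset.Icc (m + 1) (m + t), (q j : ℝ) := by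
    intro t
    induction t with
    | zero => simp
    | succ t ih =>
      have : m + (t + 1) = m + 1 + t := by omega
      rw [this, hstep, pow_succ]
      exact mul_le_mul ih (hq2 t) (by norm_num) (le_trans (by positivity) ih)
  have hpos : ∀ t, 0 < ∏ j ∈ Finset.Icc (m + 1) (m + t), (q j : ℝ) := fun t =>
    lt_of_lt_of_le (by positivity) (hpow t)
  have hpart : ∀ N, N₀ ≤ N → ∑ t ∈ Finset.range N, (a (m + 1 + t) : ℝ) /
      (C * ∏ j ∈ Finset.Icc (m + 1) (m + 1 + t), (q j : ℝ))
        = S - 1 / (C * ∏ j ∈ Finset.Icc (m + 1) (m + N), (q j : ℝ)) := by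
    intro N hN
    induction N, hN using Nat.le_induction with
    | base => exact hS
    | succ t ht ih =>
      have e : m + (t + 1) = m + 1 + t := by omega
      have h2 := hq2 t
      have hp := (hpos t).ne'
      have hc := hC.ne'
      have hq0 : (q (m + 1 + t) : ℝ) ≠ 0 := by linarith
      rw [Finset.sum_range_succ, ih, e, hstep, ha t ht,
        Nat.cast_sub (le_trans (by norm_num) (hq (m + 1 + t) (by omega)))]
      field_simp
      push_cast
      ring
  have hlim : Filter.Tendsto (fun N => 1 / (C * ∏ j ∈ Finset.Icc (m + 1) (m + N), (q j : ℝ)))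
      Filter.atTop (nhds 0) := by
    have h1 : Filter.Tendsto (fun N : ℕ => (2 : ℝ) ^ N) Filter.atTop Filter.atTop :=
      tendsto_pow_atTop_atTop_of_one_lt (by norm_num)
    have h2 := (Filter.tendsto_atTop_mono hpow h1).const_mul_atTop hC
    simp only [one_div]
    exact h2.inv_tendsto_atTop
  refine HasSum.tsum_eq ((hasSum_iff_tendsto_nat_of_nonneg (fun t => ?_) S).2 ?_)
  · positivity
  · have h3 := hlim.const_sub S
    rw [sub_zero] at h3
    refine h3.congr' ?_
    filter_upwards [Filter.eventually_ge_atTop N₀] with N hN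
    exact (hpart N hN).symm

lemma prodQ_pos (q : ℕ → ℕ) (hq : ∀ n, 1 ≤ n → 2 ≤ q n) (n : ℕ) : 0 < prodQ q n := by
  refine Finset.prod_pos fun j hj => ?_
  have := hq j (Finset.mem_Icc.1 hj).1
  exact_mod_cast (by omega : 0 < q j)

theorem stmt_7 (q i : ℕ → ℕ) (hq : ∀ n, 1 ≤ n → 2 ≤ q n)
    (hi : ∀ n, 1 ≤ n → i n ≤ q n - 1) (n : ℕ) (hn : 1 ≤ n)
    (hin : 1 ≤ i n) (htail : ∀ k, n < k → i k = 0)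
    (m : ℕ) (hm : 1 ≤ m) (hmn : m ≠ n) :
    sigmaC q i m =
      sigmaC q (fun k => if k < n then i k else if k = n then i n - 1 else q k - 1) m := by
  have hCpos := prodQ_pos q hq
  unfold sigmaC
  rcases lt_or_gt_of_ne hmn with h | h
  · -- m < n
    obtain ⟨t₀, rfl⟩ : ∃ t₀, n = m + 1 + t₀ := ⟨n - (m + 1), by omega⟩
    congr 1
    · refine Finset.sum_congr rfl fun k hk => ?_
      have := Finset.mem_Icc.1 hk
      beta_reduce
      rw [if_pos (by omega)]
    · symm
      refine tail_aux q (fun k => if k < m + 1 + t₀ then i k else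
        if k = m + 1 + t₀ then i (m + 1 + t₀) - 1 else q k - 1) hq m _ (hCpos (m - 1)) (t₀ + 1) _ ?_ ?_
      · rw [tsum_eq_sum (s := Finset.range (t₀ + 1))]
        · rw [Finset.sum_range_succ, Finset.sum_range_succ]
          have e : m + (t₀ + 1) = m + 1 + t₀ := by omega
          rw [e, add_sub_assoc]
          congr 1
          · refine Finset.sum_congr rfl fun k hk => ?_
            have := Finset.mem_range.1 hk
            rw [if_pos (by omega)]
          · rw [if_neg (by omega), if_pos rfl, Nat.cast_sub hin, ← sub_div]
            simp
        · intro t ht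
          rw [htail _ (by simp at ht; omega)]
          simp
      · intro t ht
        rw [if_neg (by omega), if_neg (by omega)]
  · -- n < m
    have h1 : ∑' t : ℕ, (i (m + 1 + t) : ℝ) /
      (prodQ q (m - 1) * ∏ j ∈ Finset.Icc (m + 1) (m + 1 + t), (q j : ℝ)) = 0 := by
      convert tsum_zero with t
      rw [htail _ (by omega)]
      simp
    rw [h1, tail_aux q (fun k => if k < n then i k else
        if k = n then i n - 1 else q k - 1) hq m _ (hCpos (m - 1)) 0 (1 / prodQ q (m - 1))
        (by simp) (fun t _ => by
            rw [if_neg (by omega), if_neg (by omega)]), add_zero]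
    have key : ∀ M, n ≤ M → ∑ k ∈ Finset.Icc 1 M, (i k : ℝ) / prodQ q k =
        ∑ k ∈ Finset.Icc 1 M, ((if k < n then i k else
        if k = n then i n - 1 else q k - 1 : ℕ) : ℝ) / prodQ q k + 1 / prodQ q M := by
      intro M hM
      induction M, hM using Nat.le_induction with
      | base =>
        obtain ⟨p, rfl⟩ : ∃ p, n = p + 1 := ⟨n - 1, by omega⟩
        rw [Finset.sum_Icc_succ_top (by omega), Finset.sum_Icc_succ_top (by omega), add_assoc]
        congr 1
        · refine Finset.sum_congr rfl fun k hk => ?_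
          have := Finset.mem_Icc.1 hk
          rw [if_pos (by omega)]
        · rw [if_neg (by omega), if_pos rfl, Nat.cast_sub hin, ← add_div]
          simp
      | succ M hM ih =>
        rw [Finset.sum_Icc_succ_top (by omega), Finset.sum_Icc_succ_top (by omega), ih,
          if_neg (by omega), if_neg (by omega), htail (M + 1) (by omega),
          Nat.cast_sub (le_trans (by norm_num) (hq (M + 1) (by omega)))]
        have e : prodQ q (M + 1) = prodQ q M * q (M + 1) := by
          unfold prodQ
          rw [Finset.prod_Icc_succ_top (by omega)]
        have hp := (hCpos M).ne'
        have hq0 : (q (M + 1) : ℝ) ≠ 0 := by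
          have := hq (M + 1) (by omega)
          exact_mod_cast (by omega : q (M + 1) ≠ 0)
        rw [e]
        field_simp
        push_cast
        ring
    exact key (m - 1) (by omega)
end

section
/- Fix n ≥ 1 with i_n ≥ 1 and i_k = 0 for all k > n, and define the second representation (i'_k) of the same Q-rational number by i'_k = i_k for k < n, i'_n = i_n − 1, and i'_k = q_k − 1 for k > n. Then the generalized shift σ_n applied to the two representations gives different values, and the difference is σ_n(i) − σ_n(i') = −1/(q_1 q_2 ⋯ q_{n−1}). -/
theorem tail_hasSum (q : ℕ → ℕ) (hq : ∀ n, 1 ≤ n → 2 ≤ q n) (n : ℕ) :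
    HasSum (fun t : ℕ => ((q (n + 1 + t) - 1 : ℕ) : ℝ) /
      ∏ j ∈ Finset.Icc (n + 1) (n + 1 + t), (q j : ℝ)) 1 := by
  have hsucc : ∀ t, ∏ j ∈ Finset.Icc (n + 1) (n + 1 + t), (q j : ℝ)
      = (∏ j ∈ Finset.Icc (n + 1) (n + t), (q j : ℝ)) * q (n + 1 + t) := by
    intro t
    have h : n + 1 + t = n + t + 1 := by ring
    rw [h, Finset.prod_Icc_succ_top (by omega)]
  have hlow : ∀ t, (2 : ℝ) ^ t ≤ ∏ j ∈ Finset.Icc (n + 1) (n + t), (q j : ℝ) := by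
    intro t
    induction t with
    | zero => simp
    | succ t ih =>
      have h : n + (t + 1) = n + 1 + t := by ring
      rw [h, hsucc, pow_succ]
      have h2 : (2 : ℝ) ≤ q (n + 1 + t) := by exact_mod_cast hq _ (by omega)
      exact mul_le_mul ih h2 (by norm_num) (le_trans (by positivity) ih)
  have hpart : ∀ N, ∑ t ∈ Finset.range N, ((q (n + 1 + t) - 1 : ℕ) : ℝ) /
      ∏ j ∈ Finset.Icc (n + 1) (n + 1 + t), (q j : ℝ)
      = 1 - (∏ j ∈ Finset.Icc (n + 1) (n + N), (q j : ℝ))⁻¹ := by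
    intro N
    induction N with
    | zero => simp
    | succ N ih =>
      rw [Finset.sum_range_succ, ih]
      have h : n + (N + 1) = n + 1 + N := by ring
      rw [h, hsucc]
      have h2 := hq (n + 1 + N) (by omega)
      have h3 : (0 : ℝ) < q (n + 1 + N) := by exact_mod_cast (by omega)
      have h4 : (0 : ℝ) < ∏ j ∈ Finset.Icc (n + 1) (n + N), (q j : ℝ) :=
        lt_of_lt_of_le (by positivity) (hlow N)
      rw [Nat.cast_sub (by omega)]
      push_cast
      field_simp
      ring
  rw [hasSum_iff_tendsto_nat_of_nonneg (fun t => by positivity)]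
  simp_rw [hpart]
  have hlim : Filter.Tendsto
      (fun N => (∏ j ∈ Finset.Icc (n + 1) (n + N), (q j : ℝ))⁻¹) Filter.atTop (nhds 0) :=
    (Filter.tendsto_atTop_mono hlow
      (tendsto_pow_atTop_atTop_of_one_lt (by norm_num))).inv_tendsto_atTop
  simpa using hlim.const_sub 1

theorem stmt_8 (q i : ℕ → ℕ) (hq : ∀ n, 1 ≤ n → 2 ≤ q n)
    (hi : ∀ n, 1 ≤ n → i n ≤ q n - 1) (n : ℕ) (hn : 1 ≤ n)
    (hin : 1 ≤ i n) (htail : ∀ k, n < k → i k = 0) :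
    sigmaC q i n ≠
      sigmaC q (fun k => if k < n then i k else if k = n then i n - 1 else q k - 1) n ∧
    sigmaC q i n -
      sigmaC q (fun k => if k < n then i k else if k = n then i n - 1 else q k - 1) n =
        -(1 / prodQ q (n - 1)) := by
  have hP : 0 < prodQ q (n - 1) := by
    unfold prodQ
    refine Finset.prod_pos fun j hj => ?_
    have := hq j (Finset.mem_Icc.1 hj).1
    exact_mod_cast (by omega)
  have key : sigmaC q i n -
      sigmaC q (fun k => if k < n then i k else if k = n then i n - 1 else q k - 1) n =
        -(1 / prodQ q (n - 1)) := by
    unfold sigmaC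
    have e1 : ∀ t, i (n + 1 + t) = 0 := fun t => htail _ (by omega)
    have e2 : ∀ t, ¬ (n + 1 + t < n) := fun t => by omega
    have e3 : ∀ t, ¬ (n + 1 + t = n) := fun t => by omega
    have e4 : ∑ k ∈ Finset.Icc 1 (n - 1),
        ((if k < n then i k else if k = n then i n - 1 else q k - 1 : ℕ) : ℝ) / prodQ q k
        = ∑ k ∈ Finset.Icc 1 (n - 1), (i k : ℝ) / prodQ q k := by
      refine Finset.sum_congr rfl fun k hk => ?_
      have hk' := Finset.mem_Icc.1 hk
      rw [if_pos (by omega)]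
    have e5 := ((tail_hasSum q hq n).div_const (prodQ q (n - 1))).tsum_eq
    simp only [div_div] at e5
    simp only [e1, e2, e3, if_false, e4]
    simp only [mul_comm (prodQ q (n - 1)), e5]
    simp
  refine ⟨fun h => ?_, key⟩
  rw [h, sub_self] at key
  have : 0 < 1 / prodQ q (n - 1) := by positivity
  linarith
end

section
/- For every m ≥ 1, x − σ_m(x) = i_m/(q_1 q_2 ⋯ q_m) + (σ^m(x)/(q_1 q_2 ⋯ q_m))·(1 − q_m). -/
lemma prodQ_succ (q : ℕ → ℕ) (n : ℕ) : prodQ q (n + 1) = prodQ q n * (q (n + 1) : ℝ) := by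
  unfold prodQ
  rw [Finset.prod_Icc_succ_top (by omega)]

lemma prodQ_add (q : ℕ → ℕ) (m t : ℕ) :
    prodQ q (m + 1 + t) = prodQ q m * ∏ j ∈ Finset.Icc (m + 1) (m + 1 + t), (q j : ℝ) := by
  induction t with
  | zero => simp [prodQ_succ]
  | succ t ih =>
    rw [← add_assoc, prodQ_succ, ih, Finset.prod_Icc_succ_top (by omega), mul_assoc]

lemma partial_le (q i : ℕ → ℕ) (hq : ∀ n, 1 ≤ n → 2 ≤ q n)
    (hi : ∀ n, 1 ≤ n → i n ≤ q n - 1) (N : ℕ) :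
    ∑ n ∈ Finset.range N, (i (n + 1) : ℝ) / prodQ q (n + 1) ≤ 1 - 1 / prodQ q N := by
  induction N with
  | zero => simp [prodQ]
  | succ N ih =>
    rw [Finset.sum_range_succ]
    have h0 := prodQ_pos q hq N
    have h1 := prodQ_pos q hq (N + 1)
    have h2 := hq (N + 1) (by omega)
    have h3 := hi (N + 1) (by omega)
    have h4 : (i (N + 1) : ℝ) + 1 ≤ q (N + 1) := by
      exact_mod_cast (by omega : i (N + 1) + 1 ≤ q (N + 1))
    have h5 : ((i (N + 1) : ℝ) + 1) / prodQ q (N + 1) ≤ 1 / prodQ q N := by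
      rw [div_le_div_iff₀ h1 h0, prodQ_succ]
      nlinarith
    rw [add_div] at h5
    linarith

lemma summable_cantor (q i : ℕ → ℕ) (hq : ∀ n, 1 ≤ n → 2 ≤ q n)
    (hi : ∀ n, 1 ≤ n → i n ≤ q n - 1) :
    Summable fun n : ℕ => (i (n + 1) : ℝ) / prodQ q (n + 1) := by
  refine summable_of_sum_range_le (c := 1)
    (fun n => div_nonneg (Nat.cast_nonneg _) (prodQ_pos q hq _).le) fun N => ?_
  have h1 := partial_le q i hq hi N
  have h2 := one_div_pos.2 (prodQ_pos q hq N)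
  linarith

theorem stmt_9 (q i : ℕ → ℕ) (hq : ∀ n, 1 ≤ n → 2 ≤ q n)
    (hi : ∀ n, 1 ≤ n → i n ≤ q n - 1) (m : ℕ) (hm : 1 ≤ m) :
    cantorVal q i - sigmaC q i m =
      (i m : ℝ) / prodQ q m + shiftVal q i m / prodQ q m * (1 - (q m : ℝ)) := by
  obtain ⟨k, rfl⟩ : ∃ k, m = k + 1 := ⟨m - 1, by omega⟩
  have hx : cantorVal q i = ∑ n ∈ Finset.range (k + 1), (i (n + 1) : ℝ) / prodQ q (n + 1)
      + shiftVal q i (k + 1) / prodQ q (k + 1) := by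
    unfold cantorVal shiftVal
    rw [← (summable_cantor q i hq hi).sum_add_tsum_nat_add (k + 1), ← tsum_div_const]
    congr 1
    refine tsum_congr fun t => ?_
    rw [show t + (k + 1) + 1 = k + 1 + 1 + t by omega, prodQ_add, div_div, mul_comm (prodQ q (k + 1))]
  have hs : sigmaC q i (k + 1) = ∑ n ∈ Finset.range k, (i (n + 1) : ℝ) / prodQ q (n + 1)
      + shiftVal q i (k + 1) / prodQ q k := by
    unfold sigmaC shiftVal
    rw [← tsum_div_const, Nat.add_sub_cancel]
    congr 1
    · rw [Finset.range_eq_Ico, Finset.sum_Ico_add' (fun n => (i n : ℝ) / prodQ q n) 0 k 1]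
      rfl
    · refine tsum_congr fun t => ?_
      rw [div_div, mul_comm (prodQ q k)]
  have h0 := (prodQ_pos q hq k).ne'
  have h2 : (q (k + 1) : ℝ) ≠ 0 := by
    have := hq (k + 1) (by omega)
    exact_mod_cast (by omega : q (k + 1) ≠ 0)
  rw [hx, hs, Finset.sum_range_succ, prodQ_succ]
  field_simp
  ring
end

section
/- Fix n ≥ 1 and digits i_1,…,i_{n−1} and i_n, and define β_k = 0 if k ∉ N_B and β_k = q_k − 1 if k ∈ N_B, and γ_k = q_k − 1 if k ∉ N_B and γ_k = 0 if k ∈ N_B. Then (whenever all displayed digits lie in the admissible ranges 0 ≤ d ≤ q_k − 1) the following pairs of digit sequences have equal sign-variable Cantor series values: (i) if n ∈ N_B and n+1 ∈ N_B: (i_1,…,i_{n−1}, q_n−1−i_n, q_{n+1}−1, β_{n+2}, β_{n+3},…) and (i_1,…,i_{n−1}, q_n−i_n, 0, γ_{n+2}, γ_{n+3},…); (ii) if n ∈ N_B and n+1 ∉ N_B: (i_1,…,i_{n−1}, q_n−1−i_n, 0, β_{n+2},…) and (i_1,…,i_{n−1}, q_n−i_n, q_{n+1}−1, γ_{n+2},…);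 (iii) if n ∉ N_B and n+1 ∈ N_B: (i_1,…,i_{n−1}, i_n, q_{n+1}−1, β_{n+2},…) and (i_1,…,i_{n−1}, i_n−1, 0, γ_{n+2},…); (iv) if n ∉ N_B and n+1 ∉ N_B: (i_1,…,i_{n−1}, i_n, 0, β_{n+2},…) and (i_1,…,i_{n−1}, i_n−1, q_{n+1}−1, γ_{n+2},…). -/
-- `(-1)^{ρ_n}` where `ρ_n = 1` if `n ∈ N_B` and `ρ_n = 2` otherwise.
open Classical in
noncomputable def sgn (NB : Set ℕ) (n : ℕ) : ℝ := if n ∈ NB then -1 else 1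

/-- The sign-variable Cantor series value `x = Σ_{n=1}^∞ (-1)^{ρ_n} i_n/(q_1 ⋯ q_n)`. -/
noncomputable def svCantorVal (NB : Set ℕ) (q i : ℕ → ℕ) : ℝ :=
  ∑' n : ℕ, sgn NB (n + 1) * (i (n + 1) : ℝ) / prodQ q (n + 1)

/-- The generalized shift operator for sign-variable Cantor series:
`σ_m = Σ_{k=1}^{m-1} (-1)^{ρ_k} i_k/(q_1⋯q_k)
      + Σ_{l=m+1}^∞ (-1)^{ρ_l} i_l/(q_1⋯q_{m-1} q_{m+1}⋯q_l)`. -/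
noncomputable def svSigma (NB : Set ℕ) (q i : ℕ → ℕ) (m : ℕ) : ℝ :=
  (∑ k ∈ Finset.Icc 1 (m - 1), sgn NB k * (i k : ℝ) / prodQ q k) +
    ∑' t : ℕ, sgn NB (m + 1 + t) * (i (m + 1 + t) : ℝ) /
      (prodQ q (m - 1) * ∏ j ∈ Finset.Icc (m + 1) (m + 1 + t), (q j : ℝ))

-- `β_k = q_k - 1` if `k ∈ N_B`, else `0`.
open Classical in
noncomputable def betaD (NB : Set ℕ) (q : ℕ → ℕ) (k : ℕ) : ℕ :=
  if k ∈ NB then q k - 1 else 0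

-- `γ_k = 0` if `k ∈ N_B`, else `q_k - 1`.
open Classical in
noncomputable def gammaD (NB : Set ℕ) (q : ℕ → ℕ) (k : ℕ) : ℕ :=
  if k ∈ NB then 0 else q k - 1

lemma two_pow_le_prodQ (q : ℕ → ℕ) (hq : ∀ n, 1 ≤ n → 2 ≤ q n) (n : ℕ) :
    (2 : ℝ) ^ n ≤ prodQ q n := by
  induction n with
  | zero => simp [prodQ]
  | succ k ih =>
    rw [prodQ_succ, pow_succ]
    have h : (2 : ℝ) ≤ q (k + 1) := by exact_mod_cast hq (k + 1) (by omega)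
    have h0 : (0 : ℝ) < 2 ^ k := by positivity
    exact mul_le_mul ih h (by norm_num) (by linarith)

lemma inv_prodQ_le (q : ℕ → ℕ) (hq : ∀ n, 1 ≤ n → 2 ≤ q n) (n : ℕ) :
    (prodQ q n)⁻¹ ≤ (1 / 2 : ℝ) ^ n := by
  rw [one_div, inv_pow]
  exact inv_anti₀ (by positivity) (two_pow_le_prodQ q hq n)

lemma sv_summable (NB : Set ℕ) (q a : ℕ → ℕ) (hq : ∀ n, 1 ≤ n → 2 ≤ q n)
    (ha : ∀ k, 1 ≤ k → a k ≤ q k) :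
    Summable (fun n : ℕ => sgn NB (n + 1) * (a (n + 1) : ℝ) / prodQ q (n + 1)) := by
  refine Summable.of_norm_bounded
    (summable_geometric_of_lt_one (r := (1 / 2 : ℝ)) (by norm_num) (by norm_num)) ?_
  intro k
  refine le_trans ?_ (inv_prodQ_le q hq k)
  have hs : |sgn NB (k + 1)| = 1 := by
    unfold sgn
    split_ifs <;> simp
  have hp := prodQ_pos q hq k
  have h2 : (2 : ℝ) ≤ q (k + 1) := by exact_mod_cast hq (k + 1) (by omega)
  have hak : (a (k + 1) : ℝ) ≤ q (k + 1) := by exact_mod_cast ha (k + 1) (by omega)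
  rw [Real.norm_eq_abs, abs_div, abs_mul, hs, one_mul, abs_of_nonneg (Nat.cast_nonneg _),
    abs_of_pos (prodQ_pos q hq _), prodQ_succ, inv_eq_one_div,
    div_le_div_iff₀ (by positivity) hp]
  nlinarith

lemma sv_eq (NB : Set ℕ) (q a b : ℕ → ℕ) (hq : ∀ n, 1 ≤ n → 2 ≤ q n)
    (ha : ∀ k, 1 ≤ k → a k ≤ q k) (hb : ∀ k, 1 ≤ k → b k ≤ q k) (n : ℕ) (hn : 1 ≤ n)
    (h1 : ∀ k, k < n → a k = b k)
    (h2 : sgn NB n * (a n : ℝ) - sgn NB n * (b n : ℝ) = 1)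
    (h3 : ∀ k, n < k → sgn NB k * (b k : ℝ) - sgn NB k * (a k : ℝ) = (q k : ℝ) - 1) :
    svCantorVal NB q a = svCantorVal NB q b := by
  have sa := sv_summable NB q a hq ha
  have sb := sv_summable NB q b hq hb
  have key := (sa.hasSum.sub sb.hasSum).tendsto_sum_nat
  have hS : ∀ N, ∑ k ∈ Finset.range N, (sgn NB (k + 1) * (a (k + 1) : ℝ) / prodQ q (k + 1)
      - sgn NB (k + 1) * (b (k + 1) : ℝ) / prodQ q (k + 1))
      = if N < n then 0 else (prodQ q N)⁻¹ := by
    intro N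
    induction N with
    | zero => simp; omega
    | succ k ih =>
      rw [Finset.sum_range_succ, ih, ← sub_div]
      have hp := prodQ_pos q hq k
      have hp1 := prodQ_pos q hq (k + 1)
      rcases lt_trichotomy (k + 1) n with h | h | h
      · rw [if_pos (by omega), if_pos h, h1 _ h]
        simp
      · rw [if_pos (by omega), if_neg (by omega), h, h2]
        simp
      · rw [if_neg (by omega), if_neg (by omega)]
        have e : sgn NB (k + 1) * (a (k + 1) : ℝ) - sgn NB (k + 1) * (b (k + 1) : ℝ)
          = 1 - (q (k + 1) : ℝ) := by linarith [h3 _ h]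
        have hq0 : (q (k + 1) : ℝ) ≠ 0 := by
          have := hq (k + 1) (by omega)
          exact_mod_cast (by omega : q (k + 1) ≠ 0)
        rw [e, prodQ_succ]
        field_simp
        ring
  have lim : Filter.Tendsto (fun N => ∑ k ∈ Finset.range N,
      (sgn NB (k + 1) * (a (k + 1) : ℝ) / prodQ q (k + 1)
      - sgn NB (k + 1) * (b (k + 1) : ℝ) / prodQ q (k + 1))) Filter.atTop (nhds 0) := by
    refine squeeze_zero (g := fun N => (1 / 2 : ℝ) ^ N) ?_ ?_
      (tendsto_pow_atTop_nhds_zero_of_lt_one (by norm_num) (by norm_num))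
    · intro N
      rw [hS]
      have := prodQ_pos q hq N
      split_ifs <;> positivity
    · intro N
      rw [hS]
      split_ifs
      · positivity
      · exact inv_prodQ_le q hq N
  exact sub_eq_zero.mp (tendsto_nhds_unique key lim)

theorem stmt_14 (NB : Set ℕ) (q i : ℕ → ℕ) (hq : ∀ n, 1 ≤ n → 2 ≤ q n)
    (hi : ∀ n, 1 ≤ n → i n ≤ q n - 1) (n : ℕ) (hn : 1 ≤ n) (hin : 1 ≤ i n) :
    -- (i) `n ∈ N_B`, `n+1 ∈ N_B`
    (n ∈ NB → n + 1 ∈ NB →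
      svCantorVal NB q (fun k => if k < n then i k else if k = n then q n - 1 - i n
        else if k = n + 1 then q (n + 1) - 1 else betaD NB q k) =
      svCantorVal NB q (fun k => if k < n then i k else if k = n then q n - i n
        else if k = n + 1 then 0 else gammaD NB q k)) ∧
    -- (ii) `n ∈ N_B`, `n+1 ∉ N_B`
    (n ∈ NB → n + 1 ∉ NB →
      svCantorVal NB q (fun k => if k < n then i k else if k = n then q n - 1 - i n
        else if k = n + 1 then 0 else betaD NB q k) =
      svCantorVal NB q (fun k => if k < n then i k else if k = n then q n - i n
        else if k = n + 1 then q (n + 1) - 1 else gammaD NB q k)) ∧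
    -- (iii) `n ∉ N_B`, `n+1 ∈ N_B`
    (n ∉ NB → n + 1 ∈ NB →
      svCantorVal NB q (fun k => if k < n then i k else if k = n then i n
        else if k = n + 1 then q (n + 1) - 1 else betaD NB q k) =
      svCantorVal NB q (fun k => if k < n then i k else if k = n then i n - 1
        else if k = n + 1 then 0 else gammaD NB q k)) ∧
    -- (iv) `n ∉ N_B`, `n+1 ∉ N_B`
    (n ∉ NB → n + 1 ∉ NB →
      svCantorVal NB q (fun k => if k < n then i k else if k = n then i n
        else if k = n + 1 then 0 else betaD NB q k) =
      svCantorVal NB q (fun k => if k < n then i k else if k = n then i n - 1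
        else if k = n + 1 then q (n + 1) - 1 else gammaD NB q k)) := by
  have hin2 := hi n hn
  have hqn := hq n hn
  have hc : ((q n - 1 - i n : ℕ) : ℝ) = (q n : ℝ) - 1 - i n := by
    rw [Nat.cast_sub hin2, Nat.cast_sub (by omega), Nat.cast_one]
  have hc2 : ((q n - i n : ℕ) : ℝ) = (q n : ℝ) - i n := Nat.cast_sub (by omega)
  have hc3 : ((i n - 1 : ℕ) : ℝ) = (i n : ℝ) - 1 := by rw [Nat.cast_sub hin, Nat.cast_one]
  have hc4 : ∀ k, n < k → ((q k - 1 : ℕ) : ℝ) = (q k : ℝ) - 1 := fun k hk => by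
    have := hq k (by omega)
    rw [Nat.cast_sub (by omega), Nat.cast_one]
  refine ⟨?_, ?_, ?_, ?_⟩ <;> intro hA hB <;> refine sv_eq NB q _ _ hq ?_ ?_ n hn ?_ ?_ ?_
  · intro k hk
    have h1 := hi k hk
    dsimp only [betaD]
    split_ifs <;> first | omega | (subst_vars; omega)
  · intro k hk
    have h1 := hi k hk
    dsimp only [gammaD]
    split_ifs <;> first | omega | (subst_vars; omega)
  · intro k hk
    simp [hk]
  · simp only [lt_irrefl, if_false, if_true, hc, hc2, hc3, sgn, hA]
    ring
  · intro k hk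
    have e1 : ¬ k < n := by omega
    have e2 : k ≠ n := by omega
    have e3 := hc4 k hk
    by_cases e : k = n + 1
    · subst e
      simp [sgn, hB, e3]
    · by_cases hk2 : k ∈ NB <;> simp [e1, e2, e, sgn, betaD, gammaD, hk2, e3]
  · intro k hk
    have h1 := hi k hk
    dsimp only [betaD]
    split_ifs <;> first | omega | (subst_vars; omega)
  · intro k hk
    have h1 := hi k hk
    dsimp only [gammaD]
    split_ifs <;> first | omega | (subst_vars; omega)
  · intro k hk
    simp [hk]
  · simp only [lt_irrefl, if_false, if_true, hc, hc2, hc3, sgn, hA]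
    ring
  · intro k hk
    have e1 : ¬ k < n := by omega
    have e2 : k ≠ n := by omega
    have e3 := hc4 k hk
    by_cases e : k = n + 1
    · subst e
      simp [sgn, hB, e3]
    · by_cases hk2 : k ∈ NB <;> simp [e1, e2, e, sgn, betaD, gammaD, hk2, e3]
  · intro k hk
    have h1 := hi k hk
    dsimp only [betaD]
    split_ifs <;> first | omega | (subst_vars; omega)
  · intro k hk
    have h1 := hi k hk
    dsimp only [gammaD]
    split_ifs <;> first | omega | (subst_vars; omega)
  · intro k hk
    simp [hk]
  · simp only [lt_irrefl, if_false, if_true, hc, hc2, hc3, sgn, hA]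
    ring
  · intro k hk
    have e1 : ¬ k < n := by omega
    have e2 : k ≠ n := by omega
    have e3 := hc4 k hk
    by_cases e : k = n + 1
    · subst e
      simp [sgn, hB, e3]
    · by_cases hk2 : k ∈ NB <;> simp [e1, e2, e, sgn, betaD, gammaD, hk2, e3]
  · intro k hk
    have h1 := hi k hk
    dsimp only [betaD]
    split_ifs <;> first | omega | (subst_vars; omega)
  · intro k hk
    have h1 := hi k hk
    dsimp only [gammaD]
    split_ifs <;> first | omega | (subst_vars; omega)
  · intro k hk
    simp [hk]
  · simp only [lt_irrefl, if_false, if_true, hc, hc2, hc3, sgn, hA]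
    ring
  · intro k hk
    have e1 : ¬ k < n := by omega
    have e2 : k ≠ n := by omega
    have e3 := hc4 k hk
    by_cases e : k = n + 1
    · subst e
      simp [sgn, hB, e3]
    · by_cases hk2 : k ∈ NB <;> simp [e1, e2, e, sgn, betaD, gammaD, hk2, e3]
end

section
/- For every m ≥ 1, σ_m(x) = x/q_{i_m,m} − (a_{i_m,m}/q_{i_m,m})·∏_{j=1}^{m−1} q_{i_j,j} + (1 − 1/q_{i_m,m})·( a_{i_1,1} + Σ_{n=2}^{m−1} a_{i_n,n} ∏_{j=1}^{n−1} q_{i_j,j} ). -/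
/-- `a_{d,n} = Σ_{t=0}^{d-1} q_{t,n}` (so `a_{0,n} = 0`). -/
noncomputable def aQt (qt : ℕ → ℕ → ℝ) (d n : ℕ) : ℝ :=
  ∑ t ∈ Finset.range d, qt t n

/-- `∏_{j=1}^{n} q_{i_j,j}` (1-based indexing; `prodQt qt i 0 = 1`). -/
noncomputable def prodQt (qt : ℕ → ℕ → ℝ) (i : ℕ → ℕ) (n : ℕ) : ℝ :=
  ∏ j ∈ Finset.Icc 1 n, qt (i j) j

/-- The positive `Q̃`-expansion value
`x = a_{i_1,1} + Σ_{n=2}^∞ a_{i_n,n} ∏_{j=1}^{n-1} q_{i_j,j}`. -/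
noncomputable def qtVal (qt : ℕ → ℕ → ℝ) (i : ℕ → ℕ) : ℝ :=
  aQt qt (i 1) 1 + ∑' t : ℕ, aQt qt (i (t + 2)) (t + 2) * prodQt qt i (t + 1)

/-- The generalized shift operator for `Q̃`-expansions:
`σ_m = a_{i_1,1} + Σ_{n=2}^{m-1} a_{i_n,n} ∏_{j=1}^{n-1} q_{i_j,j}
      + Σ_{l=m+1}^∞ a_{i_l,l} ∏_{j=1, j≠m}^{l-1} q_{i_j,j}`
(the first two summands form the partial sum `Σ_{n=1}^{m-1}`, empty when `m = 1`). -/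
noncomputable def qtSigma (qt : ℕ → ℕ → ℝ) (i : ℕ → ℕ) (m : ℕ) : ℝ :=
  (∑ n ∈ Finset.Icc 1 (m - 1), aQt qt (i n) n * prodQt qt i (n - 1)) +
    ∑' t : ℕ, aQt qt (i (m + 1 + t)) (m + 1 + t) *
      (prodQt qt i (m - 1) * ∏ j ∈ Finset.Icc (m + 1) (m + t), qt (i j) j)

/-- `σ^m(x) = Σ_{l=m+1}^∞ a_{i_l,l} ∏_{j=m+1}^{l-1} q_{i_j,j}`. -/
noncomputable def qtShift (qt : ℕ → ℕ → ℝ) (i : ℕ → ℕ) (m : ℕ) : ℝ :=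
  ∑' t : ℕ, aQt qt (i (m + 1 + t)) (m + 1 + t) * ∏ j ∈ Finset.Icc (m + 1) (m + t), qt (i j) j

lemma prodQt_succ_aux (qt : ℕ → ℕ → ℝ) (i : ℕ → ℕ) (n : ℕ) :
    prodQt qt i (n + 1) = prodQt qt i n * qt (i (n + 1)) (n + 1) := by
  unfold prodQt
  rw [Finset.prod_Icc_succ_top (by omega)]

lemma prodQt_add_aux (qt : ℕ → ℕ → ℝ) (i : ℕ → ℕ) (m t : ℕ) :
    prodQt qt i (m + t) = prodQt qt i m * ∏ j ∈ Finset.Icc (m + 1) (m + t), qt (i j) j := by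
  induction t with
  | zero => simp
  | succ t ih =>
    rw [← add_assoc, prodQt_succ_aux, ih, Finset.prod_Icc_succ_top (by omega), mul_assoc]

lemma sum_Icc_aux (f : ℕ → ℝ) (n : ℕ) :
    ∑ k ∈ Finset.Icc 1 n, f k = ∑ k ∈ Finset.range n, f (k + 1) := by
  induction n with
  | zero => simp
  | succ n ih => rw [Finset.sum_Icc_succ_top (by omega), ih, Finset.sum_range_succ]

theorem stmt_16 (mS : ℕ → ℕ) (qt : ℕ → ℕ → ℝ) (i : ℕ → ℕ)
    (hmS : ∀ n, 1 ≤ n → 1 ≤ mS n)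
    (hpos : ∀ n, 1 ≤ n → ∀ d, d ≤ mS n → 0 < qt d n)
    (hsum : ∀ n, 1 ≤ n → ∑ d ∈ Finset.range (mS n + 1), qt d n = 1)
    (hzero : ∀ d : ℕ → ℕ, (∀ j, 1 ≤ j → d j ≤ mS j) →
      Filter.Tendsto (fun n => prodQt qt d n) Filter.atTop (nhds 0))
    (hdig : ∀ n, 1 ≤ n → i n ≤ mS n) (m : ℕ) (hm : 1 ≤ m) :
    qtSigma qt i m =
      qtVal qt i / qt (i m) m - aQt qt (i m) m / qt (i m) m * prodQt qt i (m - 1) +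
        (1 - 1 / qt (i m) m) *
          (∑ n ∈ Finset.Icc 1 (m - 1), aQt qt (i n) n * prodQt qt i (n - 1)) := by
  have ha0 : ∀ n, 1 ≤ n → 0 ≤ aQt qt (i n) n := by
    intro n hn
    have := hdig n hn
    refine Finset.sum_nonneg fun t ht => (hpos n hn t ?_).le
    have := Finset.mem_range.1 ht
    omega
  have ha1 : ∀ n, 1 ≤ n → aQt qt (i n) n + qt (i n) n ≤ 1 := by
    intro n hn
    have hd := hdig n hn
    rw [← hsum n hn, aQt, ← Finset.sum_range_succ (fun t => qt t n)]
    refine Finset.sum_le_sum_of_subset_of_nonneg ?_ ?_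
    · intro t ht
      simp only [Finset.mem_range] at *
      omega
    · intro t ht _
      simp only [Finset.mem_range] at ht
      exact (hpos n hn t (by omega)).le
  have hP : ∀ n, 0 ≤ prodQt qt i n := by
    intro n
    refine Finset.prod_nonneg fun j hj => ?_
    have hj1 := (Finset.mem_Icc.1 hj).1
    exact (hpos j hj1 _ (hdig j hj1)).le
  set f : ℕ → ℝ := fun k => aQt qt (i (k + 1)) (k + 1) * prodQt qt i k with hf
  have hf0 : ∀ k, 0 ≤ f k := fun k => mul_nonneg (ha0 _ (by omega)) (hP k)
  have hb : ∀ n, ∑ k ∈ Finset.range n, f k + prodQt qt i n ≤ 1 := by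
    intro n
    induction n with
    | zero => simp [prodQt]
    | succ n ih =>
      rw [Finset.sum_range_succ, prodQt_succ_aux]
      have h1 := mul_le_mul_of_nonneg_left (ha1 (n + 1) (by omega)) (hP n)
      simp only [hf] at ih ⊢
      nlinarith
  have hs : Summable f := summable_of_sum_range_le (c := 1) hf0
    (fun n => by have := hb n; have := hP n; linarith)
  have hval : qtVal qt i = ∑' k, f k := by
    rw [hs.tsum_eq_zero_add]
    simp [qtVal, hf, prodQt]
  obtain ⟨M, rfl⟩ : ∃ M, m = M + 1 := ⟨m - 1, by omega⟩
  have hq : 0 < qt (i (M + 1)) (M + 1) := hpos _ (by omega) _ (hdig _ (by omega))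
  have hsplit := hs.sum_add_tsum_nat_add (M + 1)
  have htail : ∑' t : ℕ, aQt qt (i (M + 1 + 1 + t)) (M + 1 + 1 + t) *
      (prodQt qt i M * ∏ j ∈ Finset.Icc (M + 1 + 1) (M + 1 + t), qt (i j) j)
      = (∑' t, f (t + (M + 1))) / qt (i (M + 1)) (M + 1) := by
    rw [← tsum_div_const]
    refine tsum_congr fun t => ?_
    simp only [hf]
    rw [show t + (M + 1) + 1 = M + 1 + 1 + t by ring, show t + (M + 1) = M + 1 + t by ring,
      prodQt_add_aux, prodQt_succ_aux]
    field_simp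
  unfold qtSigma
  simp only [Nat.add_sub_cancel]
  rw [htail, hval, ← hsplit, sum_Icc_aux, Finset.sum_range_succ]
  simp only [Nat.add_sub_cancel, hf]
  field_simp
  ring
end

section
/- For every m ≥ 1, σ_m(x) = x/q_{i_m,m} − ((−1)^{ρ_m} a_{i_m,m}/q_{i_m,m})·∏_{j=1}^{m−1} q_{i_j,j} + (1 − 1/q_{i_m,m})·( (−1)^{ρ_1} a_{i_1,1} + Σ_{n=2}^{m−1} (−1)^{ρ_n} a_{i_n,n} ∏_{j=1}^{n−1} q_{i_j,j} ). -/
/-- The sign-variable `Q̃`-expansion value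
`x = (-1)^{ρ_1} a_{i_1,1} + Σ_{n=2}^∞ (-1)^{ρ_n} a_{i_n,n} ∏_{j=1}^{n-1} q_{i_j,j}`. -/
noncomputable def svQtVal (NB : Set ℕ) (qt : ℕ → ℕ → ℝ) (i : ℕ → ℕ) : ℝ :=
  sgn NB 1 * aQt qt (i 1) 1 +
    ∑' t : ℕ, sgn NB (t + 2) * aQt qt (i (t + 2)) (t + 2) * prodQt qt i (t + 1)

/-- The generalized shift operator for sign-variable `Q̃`-expansions:
`σ_m = Σ_{n=1}^{m-1} (-1)^{ρ_n} a_{i_n,n} ∏_{j=1}^{n-1} q_{i_j,j}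
      + Σ_{l=m+1}^∞ (-1)^{ρ_l} a_{i_l,l} ∏_{j=1, j≠m}^{l-1} q_{i_j,j}`. -/
noncomputable def svQtSigma (NB : Set ℕ) (qt : ℕ → ℕ → ℝ) (i : ℕ → ℕ) (m : ℕ) : ℝ :=
  (∑ n ∈ Finset.Icc 1 (m - 1), sgn NB n * aQt qt (i n) n * prodQt qt i (n - 1)) +
    ∑' t : ℕ, sgn NB (m + 1 + t) * aQt qt (i (m + 1 + t)) (m + 1 + t) *
      (prodQt qt i (m - 1) * ∏ j ∈ Finset.Icc (m + 1) (m + t), qt (i j) j)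

theorem svAux_summable (NB : Set ℕ) (mS : ℕ → ℕ) (qt : ℕ → ℕ → ℝ) (i : ℕ → ℕ)
    (hpos : ∀ n, 1 ≤ n → ∀ d, d ≤ mS n → 0 < qt d n)
    (hsum : ∀ n, 1 ≤ n → ∑ d ∈ Finset.range (mS n + 1), qt d n = 1)
    (hdig : ∀ n, 1 ≤ n → i n ≤ mS n) :
    Summable (fun n : ℕ => sgn NB (n + 1) * aQt qt (i (n + 1)) (n + 1) * prodQt qt i n) := by
  have hP : ∀ n, 0 < prodQt qt i n := by
    intro n
    refine Finset.prod_pos fun j hj => ?_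
    have h1 := (Finset.mem_Icc.mp hj).1
    exact hpos j h1 _ (hdig j h1)
  have hPs : ∀ n, prodQt qt i (n + 1) = prodQt qt i n * qt (i (n + 1)) (n + 1) := by
    intro n
    exact Finset.prod_Icc_succ_top (by omega) _
  have ha0 : ∀ n, 0 ≤ aQt qt (i (n + 1)) (n + 1) := by
    intro n
    refine Finset.sum_nonneg fun t ht => ?_
    have h2 := hdig (n + 1) (by omega)
    have h3 := Finset.mem_range.mp ht
    exact (hpos (n + 1) (by omega) t (by omega)).le
  have ha1 : ∀ n, aQt qt (i (n + 1)) (n + 1) + qt (i (n + 1)) (n + 1) ≤ 1 := by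
    intro n
    have h2 := hdig (n + 1) (by omega)
    rw [← hsum (n + 1) (by omega), aQt, ← Finset.sum_range_succ (fun t => qt t (n + 1))]
    refine Finset.sum_le_sum_of_subset_of_nonneg ?_ ?_
    · exact Finset.range_mono (by omega)
    · intro t ht _
      have h3 := Finset.mem_range.mp ht
      exact (hpos (n + 1) (by omega) t (by omega)).le
  have hg : Summable (fun n : ℕ => aQt qt (i (n + 1)) (n + 1) * prodQt qt i n) := by
    refine summable_of_sum_range_le (c := 1) (fun n => mul_nonneg (ha0 n) (hP n).le) ?_
    have key : ∀ n, ∑ k ∈ Finset.range n, aQt qt (i (k + 1)) (k + 1) * prodQt qt i k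
        ≤ 1 - prodQt qt i n := by
      intro n
      induction n with
      | zero => simp [prodQt]
      | succ n ih =>
        rw [Finset.sum_range_succ, hPs]
        nlinarith [ha1 n, hP n]
    intro n
    linarith [key n, hP n]
  refine Summable.of_norm_bounded hg fun n => ?_
  have hs : |sgn NB (n + 1)| = 1 := by
    unfold sgn
    split_ifs <;> simp
  rw [Real.norm_eq_abs, abs_mul, abs_mul, hs, one_mul, abs_of_nonneg (ha0 n),
    abs_of_pos (hP n)]

theorem stmt_18 (NB : Set ℕ) (mS : ℕ → ℕ) (qt : ℕ → ℕ → ℝ) (i : ℕ → ℕ)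
    (hmS : ∀ n, 1 ≤ n → 1 ≤ mS n)
    (hpos : ∀ n, 1 ≤ n → ∀ d, d ≤ mS n → 0 < qt d n)
    (hsum : ∀ n, 1 ≤ n → ∑ d ∈ Finset.range (mS n + 1), qt d n = 1)
    (hzero : ∀ d : ℕ → ℕ, (∀ j, 1 ≤ j → d j ≤ mS j) →
      Filter.Tendsto (fun n => prodQt qt d n) Filter.atTop (nhds 0))
    (hdig : ∀ n, 1 ≤ n → i n ≤ mS n) (m : ℕ) (hm : 1 ≤ m) :
    svQtSigma NB qt i m =
      svQtVal NB qt i / qt (i m) m -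
        sgn NB m * aQt qt (i m) m / qt (i m) m * prodQt qt i (m - 1) +
        (1 - 1 / qt (i m) m) *
          (∑ n ∈ Finset.Icc 1 (m - 1), sgn NB n * aQt qt (i n) n * prodQt qt i (n - 1)) := by
  obtain ⟨k, rfl⟩ : ∃ k, m = k + 1 := ⟨m - 1, by omega⟩
  have hS := svAux_summable NB mS qt i hpos hsum hdig
  have hq : qt (i (k + 1)) (k + 1) ≠ 0 := (hpos _ hm _ (hdig _ hm)).ne'
  have hfin : (∑ n ∈ Finset.Icc 1 k, sgn NB n * aQt qt (i n) n * prodQt qt i (n - 1))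
      = ∑ n ∈ Finset.range k,
        sgn NB (n + 1) * aQt qt (i (n + 1)) (n + 1) * prodQt qt i n := by
    clear hS hq hm
    induction k with
    | zero => simp
    | succ k ih =>
      rw [Finset.sum_Icc_succ_top (by omega), ih, Finset.sum_range_succ]
      rfl
  have hval : svQtVal NB qt i = ∑' n : ℕ,
      sgn NB (n + 1) * aQt qt (i (n + 1)) (n + 1) * prodQt qt i n := by
    rw [hS.tsum_eq_zero_add]
    simp [svQtVal, prodQt]
  have hsplit := hS.sum_add_tsum_nat_add (k + 1)
  have htail : (∑' t : ℕ, sgn NB (t + (k + 1) + 1) * aQt qt (i (t + (k + 1) + 1))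
      (t + (k + 1) + 1) * prodQt qt i (t + (k + 1))) = qt (i (k + 1)) (k + 1) *
      ∑' t : ℕ, sgn NB (k + 1 + 1 + t) * aQt qt (i (k + 1 + 1 + t)) (k + 1 + 1 + t) *
      (prodQt qt i k * ∏ j ∈ Finset.Icc (k + 1 + 1) (k + 1 + t), qt (i j) j) := by
    rw [← tsum_mul_left]
    refine tsum_congr fun t => ?_
    have hp : prodQt qt i (t + (k + 1)) = prodQt qt i k * qt (i (k + 1)) (k + 1) *
        ∏ j ∈ Finset.Icc (k + 1 + 1) (k + 1 + t), qt (i j) j := by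
      induction t with
      | zero =>
        simp [prodQt, Finset.prod_Icc_succ_top]
      | succ t ih =>
        rw [show t + 1 + (k + 1) = (t + (k + 1)) + 1 by omega,
          show k + 1 + (t + 1) = (k + 1 + t) + 1 by omega,
          Finset.prod_Icc_succ_top (by omega), ← mul_assoc, ← ih,
          show k + 1 + t + 1 = t + (k + 1) + 1 by omega]
        exact Finset.prod_Icc_succ_top (by omega) _
    rw [hp, show t + (k + 1) + 1 = k + 1 + 1 + t by omega]
    ring
  rw [htail, ← hval, Finset.sum_range_succ, ← hfin] at hsplit
  rw [svQtSigma, ← hsplit]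
  simp only [Nat.add_sub_cancel]
  generalize (∑' t : ℕ, sgn NB (k + 1 + 1 + t) * aQt qt (i (k + 1 + 1 + t)) (k + 1 + 1 + t) *
      (prodQt qt i k * ∏ j ∈ Finset.Icc (k + 1 + 1) (k + 1 + t), qt (i j) j)) = T
  generalize (∑ n ∈ Finset.Icc 1 k, sgn NB n * aQt qt (i n) n * prodQt qt i (n - 1)) = S
  field_simp
  ring
end
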